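/- arXiv:2601.17261 — 5 statements merged into one kernel-verified Lean document; each statement's English description precedes it below -/
import Mathlib

section
/- Let G ∈ ℝ^{m×n} be a nonzero matrix, let A ∈ ℝ^{n×r} have orthonormal columns (AᵀA = I_r), and let R ∈ ℝ^{m×r} be any matrix with ⟨R, GA⟩_F ≠ 0. Define the noiseless AGZO estimate Ĝ := ⟨G, RAᵀ⟩_F · RAᵀ. Then the cosine similarity between Ĝ and G satisfies ⟨Ĝ, G⟩_F / (‖Ĝ‖_F · ‖G‖_F) = |⟨R, GA⟩_F| / (‖R‖_F · ‖G‖_F). -/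
open Matrix

attribute [local instance] Matrix.frobeniusNormedAddCommGroup Matrix.frobeniusNormedSpace

noncomputable section

/-- Frobenius inner product `⟨X,Y⟩_F = tr(XᵀY)`. -/
def frobInner {ι κ : Type*} [Fintype ι] [Fintype κ]
    (X Y : Matrix ι κ ℝ) : ℝ := (Xᵀ * Y).trace

theorem frob_norm_sq {p q : ℕ} (X : Matrix (Fin p) (Fin q) ℝ) :
    ‖X‖ ^ 2 = frobInner X X := by
  have h0 : (0:ℝ) ≤ ∑ i, ∑ j, ‖X i j‖ ^ (2:ℝ) := by positivity
  rw [Matrix.frobenius_norm_def, ← Real.sqrt_eq_rpow, Real.sq_sqrt h0, frobInner,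
    Matrix.trace, Finset.sum_comm]
  refine Finset.sum_congr rfl fun j _ => ?_
  simp only [Matrix.diag_apply, Matrix.mul_apply, Matrix.transpose_apply]
  refine Finset.sum_congr rfl fun i _ => ?_
  rw [Real.rpow_two, Real.norm_eq_abs, sq_abs, sq]

/-- for the noiseless AGZO estimate `Ĝ = ⟨G, RAᵀ⟩_F · RAᵀ`, the cosine
similarity with `G` is `|⟨R, GA⟩_F| / (‖R‖_F ‖G‖_F)`. -/
theorem agzo_cosine_pointwise (m n r : ℕ)
    (G : Matrix (Fin m) (Fin n) ℝ) (hG : G ≠ 0)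
    (A : Matrix (Fin n) (Fin r) ℝ) (hA : Aᵀ * A = 1)
    (R : Matrix (Fin m) (Fin r) ℝ) (hR : frobInner R (G * A) ≠ 0) :
    frobInner (frobInner G (R * Aᵀ) • (R * Aᵀ)) G
        / (‖frobInner G (R * Aᵀ) • (R * Aᵀ)‖ * ‖G‖)
      = |frobInner R (G * A)| / (‖R‖ * ‖G‖) := by
  have h1 : frobInner G (R * Aᵀ) = frobInner R (G * A) := by
    unfold frobInner
    rw [← Matrix.trace_transpose (Rᵀ * (G * A))]
    simp only [Matrix.transpose_mul, Matrix.transpose_transpose]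
    rw [← Matrix.mul_assoc, Matrix.trace_mul_comm, Matrix.mul_assoc]
  have h2 : frobInner (R * Aᵀ) G = frobInner R (G * A) := by
    unfold frobInner
    rw [Matrix.transpose_mul, Matrix.transpose_transpose, Matrix.mul_assoc,
      Matrix.trace_mul_comm, Matrix.mul_assoc]
  have h3 : ‖R * Aᵀ‖ = ‖R‖ := by
    have h : ‖R * Aᵀ‖ ^ 2 = ‖R‖ ^ 2 := by
      rw [frob_norm_sq, frob_norm_sq]
      unfold frobInner
      rw [Matrix.transpose_mul, Matrix.transpose_transpose, Matrix.mul_assoc,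
        Matrix.trace_mul_comm, Matrix.mul_assoc, Matrix.mul_assoc, hA, Matrix.mul_one]
    exact (sq_eq_sq₀ (norm_nonneg _) (norm_nonneg _)).1 h
  rw [h1, norm_smul, h3]
  have h4 : frobInner (frobInner R (G * A) • (R * Aᵀ)) G
      = |frobInner R (G * A)| * |frobInner R (G * A)| := by
    rw [abs_mul_abs_self]
    nth_rewrite 3 [← h2]
    simp [frobInner]
  rw [h4, Real.norm_eq_abs, mul_assoc, mul_div_mul_left _ _ (abs_ne_zero.2 hR)]

end
end

section
/- Let d ≥ 1 be an integer, let r be a random vector in ℝ^d whose coordinates are i.i.d. standard Gaussian, and let k ∈ ℝ^d be a unit vector (‖k‖₂ = 1). Then E[ |⟨r, k⟩| / ‖r‖₂ ] = Γ(d/2) / (√π · Γ((d+1)/2)), where the integrand is defined to be 0 at r = 0 (a null set) and Γ is the real Gamma function. -/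
open MeasureTheory ProbabilityTheory Real

noncomputable section

lemma aux_pi_density (d : ℕ) :
    (Measure.pi fun _ : Fin d => gaussianReal 0 1) =
      (volume : Measure (Fin d → ℝ)).withDensity
        (fun x => ENNReal.ofReal (∏ i, gaussianPDFReal 0 1 (x i))) := by
  refine Measure.pi_eq fun s hs => ?_
  rw [withDensity_apply _ (MeasurableSet.univ_pi hs), volume_pi, Measure.restrict_pi_pi,
    ← ofReal_integral_eq_lintegral_ofReal, integral_fintype_prod_eq_prod,
    ENNReal.ofReal_prod_of_nonneg]
  · refine Finset.prod_congr rfl fun i _ => ?_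
    rw [gaussianReal_apply_eq_integral 0 one_ne_zero]
  · intro i _
    exact integral_nonneg fun x => gaussianPDFReal_nonneg _ _ _
  · exact Integrable.fintype_prod fun i => (integrable_gaussianPDFReal 0 1).restrict
  · exact Filter.Eventually.of_forall fun x =>
      Finset.prod_nonneg fun i _ => gaussianPDFReal_nonneg _ _ _

lemma aux_integral_pi (d : ℕ) (F : EuclideanSpace ℝ (Fin d) → ℝ) :
    ∫ r, F (WithLp.toLp 2 r) ∂(Measure.pi fun _ : Fin d => gaussianReal 0 1) =
      ((√(2 * π))⁻¹) ^ d * ∫ x : EuclideanSpace ℝ (Fin d), F x * exp (-(1/2) * ‖x‖ ^ 2) := by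
  rw [aux_pi_density, integral_withDensity_eq_integral_toReal_smul (by fun_prop) (by simp),
    ← (PiLp.volume_preserving_toLp (Fin d)).integral_comp
      (MeasurableEquiv.toLp 2 (Fin d → ℝ)).measurableEmbedding, ← integral_const_mul]
  congr 1 with x
  rw [ENNReal.toReal_ofReal (Finset.prod_nonneg fun i _ => gaussianPDFReal_nonneg _ _ _)]
  simp only [gaussianPDFReal, Finset.prod_mul_distrib, Finset.prod_const, Finset.card_univ,
    Fintype.card_fin, ← Real.exp_sum, EuclideanSpace.real_norm_sq_eq, smul_eq_mul]
  simp only [NNReal.coe_one, mul_one, sub_zero, Finset.mul_sum]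
  rw [show ∑ i, -x i ^ 2 / 2 = ∑ i, -(1/2) * x i ^ 2 from
    Finset.sum_congr rfl fun i _ => by ring]
  ring

lemma aux_polar (d : ℕ) (hd : 1 ≤ d) (g : EuclideanSpace ℝ (Fin d) → ℝ) (h : ℝ → ℝ) :
    ∫ x : EuclideanSpace ℝ (Fin d), g (‖x‖⁻¹ • x) * h ‖x‖ =
      (∫ u, g (u : EuclideanSpace ℝ (Fin d))
        ∂(volume : Measure (EuclideanSpace ℝ (Fin d))).toSphere) *
        ∫ y in Set.Ioi (0 : ℝ), y ^ (d - 1) * h y := by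
  have : Nonempty (Fin d) := ⟨⟨0, hd⟩⟩
  have h1 : ∫ x : EuclideanSpace ℝ (Fin d), g (‖x‖⁻¹ • x) * h ‖x‖ =
      ∫ x : ({(0 : EuclideanSpace ℝ (Fin d))}ᶜ : Set (EuclideanSpace ℝ (Fin d))), g (‖x.1‖⁻¹ • x.1) * h ‖x.1‖
        ∂((volume : Measure (EuclideanSpace ℝ (Fin d))).comap Subtype.val) := by
    rw [integral_subtype_comap (measurableSet_singleton _).compl
      fun x : EuclideanSpace ℝ (Fin d) ↦ g (‖x‖⁻¹ • x) * h ‖x‖,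
        restrict_compl_singleton]
  have h2 := (volume : Measure (EuclideanSpace ℝ (Fin d))).measurePreserving_homeomorphUnitSphereProd.integral_comp
        (Homeomorph.measurableEmbedding _) (fun p => g p.1 * h p.2)
  simp only [homeomorphUnitSphereProd_apply_fst_coe, homeomorphUnitSphereProd_apply_snd_coe] at h2
  rw [h1, h2, integral_prod_mul (fun u : Metric.sphere (0 : EuclideanSpace ℝ (Fin d)) 1 => g u)
    (fun y : Set.Ioi (0:ℝ) => h y)]
  congr 1
  simp only [Measure.volumeIoiPow, ENNReal.ofReal]
  rw [integral_withDensity_eq_integral_smul,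
    integral_subtype_comap measurableSet_Ioi fun a ↦ Real.toNNReal (a ^ (_ - 1)) • h a,
    setIntegral_congr_fun measurableSet_Ioi fun x hx ↦ ?_]
  · rw [NNReal.smul_def, Real.coe_toNNReal _ (pow_nonneg hx.out.le _)]
    simp
  · exact (measurable_subtype_coe.pow_const _).real_toNNReal

lemma aux_radial (n : ℕ) : ∫ y in Set.Ioi (0 : ℝ), y ^ n * exp (-(1/2) * y ^ 2) =
    (1/2 : ℝ) ^ (-((n:ℝ) + 1) / 2) * (1 / 2) * Gamma ((n + 1) / 2) := by
  rw [← integral_rpow_mul_exp_neg_mul_rpow (p := 2) (q := n) (b := 1/2) (by norm_num)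
    (by have : (0:ℝ) ≤ n := n.cast_nonneg
        linarith) (by norm_num)]
  simp

lemma aux_abs_gaussian : ∫ x, |x| ∂(gaussianReal 0 1) = (√(2 * π))⁻¹ * 2 := by
  rw [integral_gaussianReal_eq_integral_smul one_ne_zero]
  have := integral_comp_abs (f := fun y => (√(2 * π))⁻¹ * (y ^ 1 * exp (-(1/2) * y ^ 2)))
  rw [integral_const_mul, integral_const_mul, aux_radial, ← integral_const_mul] at this
  norm_num at this
  simp only [gaussianPDFReal, smul_eq_mul]
  convert this using 1
  · congr 1 with x
    norm_num
    ring_nf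
  · rw [Real.sqrt_mul (by norm_num), mul_inv]
    ring

lemma aux_abs_inner (d : ℕ) (k : EuclideanSpace ℝ (Fin d)) (hk : ‖k‖ = 1) :
    ∫ r, |inner ℝ k (WithLp.toLp 2 r)| ∂(Measure.pi fun _ : Fin d => gaussianReal 0 1)
      = (√(2 * π))⁻¹ * 2 := by
  have h1 : (stdGaussian (EuclideanSpace ℝ (Fin d))).map (innerSL ℝ k) = gaussianReal 0 1 := by
    rw [IsGaussian.map_eq_gaussianReal, variance_dual_stdGaussian,
      integral_strongDual_stdGaussian, innerSL_apply_norm, hk]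
    simp
  rw [← aux_abs_gaussian]
  conv_rhs => rw [← h1]
  rw [integral_map (by fun_prop) (by fun_prop),
    ← map_pi_eq_stdGaussian, integral_map (by fun_prop) (by fun_prop)]
  simp

/-- if `r` has i.i.d. standard Gaussian coordinates in `ℝ^d` and `k` is a
unit vector, then `E[|⟨r,k⟩| / ‖r‖₂] = Γ(d/2)/(√π·Γ((d+1)/2))` (the integrand being
`0/0 = 0` on the null set `r = 0`). -/
theorem expected_abs_inner_over_norm_gaussian (d : ℕ) (hd : 1 ≤ d)
    (k : Fin d → ℝ) (hk : Real.sqrt (∑ i, k i ^ 2) = 1) :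
    ∫ r, |∑ i, r i * k i| / Real.sqrt (∑ i, r i ^ 2)
        ∂(Measure.pi fun _ : Fin d => gaussianReal 0 1)
      = Real.Gamma (d / 2) / (Real.sqrt π * Real.Gamma ((d + 1) / 2)) := by
  set K : EuclideanSpace ℝ (Fin d) := WithLp.toLp 2 k with hK
  have hKn : ‖K‖ = 1 := by
    rw [EuclideanSpace.norm_eq]
    simpa [hK] using hk
  have e1 : ∀ r : Fin d → ℝ, |∑ i, r i * k i| / Real.sqrt (∑ i, r i ^ 2) =
      (fun x : EuclideanSpace ℝ (Fin d) => |inner ℝ K x| / ‖x‖) (WithLp.toLp 2 r) := by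
    intro r
    simp [hK, EuclideanSpace.norm_eq, PiLp.inner_apply]
  simp_rw [e1]
  rw [aux_integral_pi d (fun x => |inner ℝ K x| / ‖x‖)]
  have h2 := aux_abs_inner d K hKn
  rw [aux_integral_pi d (fun x => |inner ℝ K x|)] at h2
  have p1 := aux_polar d hd (fun x => |inner ℝ K x|) (fun y => exp (-(1/2) * y ^ 2))
  have p2 := aux_polar d hd (fun x => |inner ℝ K x|) (fun y => y * exp (-(1/2) * y ^ 2))
  have q1 : ∀ x : EuclideanSpace ℝ (Fin d),
      |inner ℝ K (‖x‖⁻¹ • x)| = |inner ℝ K x| / ‖x‖ := by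
    intro x
    rw [real_inner_smul_right, abs_mul, abs_inv, abs_norm]
    ring
  have q2 : ∀ x : EuclideanSpace ℝ (Fin d),
      |inner ℝ K x| / ‖x‖ * (‖x‖ * exp (-(1/2) * ‖x‖ ^ 2)) =
        |inner ℝ K x| * exp (-(1/2) * ‖x‖ ^ 2) := by
    intro x
    rcases eq_or_ne x 0 with rfl | hx
    · simp
    · have : ‖x‖ ≠ 0 := norm_ne_zero_iff.2 hx
      field_simp
  have q3 : ∀ y : ℝ, y ^ (d - 1) * (y * exp (-(1/2) * y ^ 2)) = y ^ d * exp (-(1/2) * y ^ 2) := by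
    intro y
    rw [← mul_assoc, ← pow_succ, Nat.sub_add_cancel hd]
  simp_rw [q1] at p1 p2
  simp_rw [q2, q3] at p2
  rw [aux_radial, Nat.cast_sub hd] at p1
  rw [aux_radial] at p2
  rw [p2] at h2
  rw [p1]
  set S := ∫ u, |inner ℝ K (u : EuclideanSpace ℝ (Fin d))|
        ∂(volume : Measure (EuclideanSpace ℝ (Fin d))).toSphere
  have hd0 : (0:ℝ) < d := by exact_mod_cast hd
  have hG : 0 < Gamma (((d:ℝ) + 1) / 2) := Gamma_pos_of_pos (by positivity)
  have hpw : (1/2 : ℝ) ^ (-((d:ℝ) + 1) / 2) = (1/2 : ℝ) ^ (-(d:ℝ) / 2) * √2 := by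
    rw [show -((d:ℝ) + 1) / 2 = -(d:ℝ) / 2 + -(1 / 2) by ring, rpow_add (by norm_num),
      rpow_neg (by norm_num) (1/2), ← Real.sqrt_eq_rpow, ← Real.sqrt_inv]
    norm_num
  rw [hpw] at h2
  simp only [Nat.cast_one, sub_add_cancel]
  have hP : (0:ℝ) < (1/2 : ℝ) ^ (-(d:ℝ) / 2) := by positivity
  set P := (1/2 : ℝ) ^ (-(d:ℝ) / 2)
  set C := (√(2 * π))⁻¹ ^ d
  rw [Real.sqrt_mul (by norm_num)] at h2
  have h22 : √2 * √2 = (2:ℝ) := Real.mul_self_sqrt (by norm_num)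
  have hpi : 0 < √π := Real.sqrt_pos.2 pi_pos
  have hs2 : 0 < √(2:ℝ) := by positivity
  rw [eq_div_iff (by positivity)]
  have h3 : C * (S * (P * √2 * (1/2) * Gamma ((d+1)/2))) * (√2 * √π) = 2 := by
    rw [h2]; field_simp
  have h4 : C * S * P * (1/2) * Gamma ((d+1)/2) * √π * (√2 * √2) = 2 := by
    refine Eq.trans ?_ h3
    ring
  rw [h22] at h4
  linear_combination (Gamma (d/2) / 2) * h4

end
end

section
/- For every real u > 1/2, the Gamma function satisfies √(u − 1/2) < Γ(u + 1/2)/Γ(u) ≤ √u; moreover the upper bound Γ(u + 1/2)/Γ(u) ≤ √u holds for every real u > 0. -/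
open Real

lemma gr_weak (u : ℝ) (hu : 0 < u) :
    Real.Gamma (u + 1/2) ^ 2 ≤ u * Real.Gamma u ^ 2 := by
  have h := Real.Gamma_mul_add_mul_le_rpow_Gamma_mul_rpow_Gamma (s := u) (t := u + 1)
    (a := 1/2) (b := 1/2) hu (by linarith) (by norm_num) (by norm_num) (by norm_num)
  have e : (1/2 : ℝ) * u + 1/2 * (u + 1) = u + 1/2 := by ring
  have h0 := Real.Gamma_pos_of_pos hu
  have h1 : 0 < Real.Gamma (u + 1/2) := Real.Gamma_pos_of_pos (by linarith)
  rw [e, Real.Gamma_add_one hu.ne', ← Real.sqrt_eq_rpow, ← Real.sqrt_eq_rpow,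
    ← Real.sqrt_mul h0.le] at h
  have h2 := (Real.le_sqrt' h1).1 h
  nlinarith

lemma gr_strict (u : ℝ) (hu : 0 < u) :
    Real.Gamma (u + 1/2) ^ 2 < u * Real.Gamma u ^ 2 := by
  have h := gr_weak (u + 1) (by linarith)
  have h0 := Real.Gamma_pos_of_pos hu
  have e : u + 1 + 1/2 = (u + 1/2) + 1 := by ring
  rw [e, Real.Gamma_add_one hu.ne', Real.Gamma_add_one (by linarith)] at h
  have h3 : 0 < (u + 1/2) ^ 2 := by positivity
  have h4 : 0 < u * Real.Gamma u ^ 2 := by positivity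
  refine lt_of_mul_lt_mul_left ?_ h3.le
  nlinarith

lemma gr_upper (u : ℝ) (hu : 0 < u) :
    Real.Gamma (u + 1/2) / Real.Gamma u ≤ Real.sqrt u := by
  have h0 := Real.Gamma_pos_of_pos hu
  apply Real.le_sqrt_of_sq_le
  rw [div_pow, div_le_iff₀ (by positivity)]
  exact gr_weak u hu

/-- Gautschi/Wendel bounds: for every `u > 1/2`,
`√(u − 1/2) < Γ(u + 1/2)/Γ(u) ≤ √u`, and the upper bound holds for all `u > 0`. -/
theorem gamma_ratio_sqrt_bounds :
    (∀ u : ℝ, 1/2 < u →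
      Real.sqrt (u - 1/2) < Real.Gamma (u + 1/2) / Real.Gamma u ∧
      Real.Gamma (u + 1/2) / Real.Gamma u ≤ Real.sqrt u) ∧
    (∀ u : ℝ, 0 < u → Real.Gamma (u + 1/2) / Real.Gamma u ≤ Real.sqrt u) := by
  refine ⟨fun u hu => ⟨?_, gr_upper u (by linarith)⟩, gr_upper⟩
  obtain ⟨v, rfl⟩ : ∃ v, u = v + 1/2 := ⟨u - 1/2, by ring⟩
  have hv : 0 < v := by linarith
  have h := gr_strict v hv
  have h0 := Real.Gamma_pos_of_pos hv
  have h1 : 0 < Real.Gamma (v + 1/2) := Real.Gamma_pos_of_pos (by linarith)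
  have e : v + 1/2 + 1/2 = v + 1 := by ring
  rw [e, Real.Gamma_add_one hv.ne', add_sub_cancel_right, Real.sqrt_lt' (by positivity),
    div_pow, lt_div_iff₀ (by positivity)]
  nlinarith
end

section
/- For every integer D ≥ 2, √(2/(πD)) ≤ β_D ≤ √(2/(π(D−1))), where β_D := Γ(D/2)/(√π · Γ((D+1)/2)). -/
open Real

noncomputable section

/-- `β_D = Γ(D/2)/(√π·Γ((D+1)/2))`. -/
def beta (D : ℕ) : ℝ :=
  Real.Gamma (D / 2) / (Real.sqrt π * Real.Gamma ((D + 1) / 2))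

theorem gamma_half_sq (x : ℝ) (hx : 0 < x) :
    Real.Gamma (x + 1 / 2) ^ 2 ≤ Real.Gamma x * Real.Gamma (x + 1) := by
  have h := Real.Gamma_mul_add_mul_le_rpow_Gamma_mul_rpow_Gamma hx
    (show 0 < x + 1 by linarith) (a := 1 / 2) (b := 1 / 2) (by norm_num) (by norm_num)
    (by norm_num)
  have e : (1 / 2 : ℝ) * x + 1 / 2 * (x + 1) = x + 1 / 2 := by ring
  have h1 := Real.Gamma_pos_of_pos hx
  have h2 := Real.Gamma_pos_of_pos (show 0 < x + 1 by linarith)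
  have h3 := Real.Gamma_pos_of_pos (show 0 < x + 1 / 2 by linarith)
  rw [e, ← Real.sqrt_eq_rpow, ← Real.sqrt_eq_rpow, ← Real.sqrt_mul h1.le] at h
  exact (Real.le_sqrt h3.le (by positivity)).1 h

/-- for every integer `D ≥ 2`, `√(2/(πD)) ≤ β_D ≤ √(2/(π(D−1)))`. -/
theorem beta_bounds (D : ℕ) (hD : 2 ≤ D) :
    Real.sqrt (2 / (π * D)) ≤ beta D ∧ beta D ≤ Real.sqrt (2 / (π * (D - 1))) := by
  have hd : (2 : ℝ) ≤ D := by exact_mod_cast hD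
  have hpi := Real.pi_pos
  have hd1 : (0 : ℝ) < D - 1 := by linarith
  have hd0 : (0 : ℝ) < D := by linarith
  have g1 := gamma_half_sq ((D : ℝ) / 2) (by linarith)
  have g2 := gamma_half_sq (((D : ℝ) - 1) / 2) (by linarith)
  rw [Real.Gamma_add_one (by positivity),
    show (D : ℝ) / 2 + 1 / 2 = (D + 1) / 2 by ring] at g1
  have r := Real.Gamma_add_one (s := ((D : ℝ) - 1) / 2) (by positivity)
  rw [show ((D : ℝ) - 1) / 2 + 1 = (D + 1) / 2 by ring] at r g2
  rw [show ((D : ℝ) - 1) / 2 + 1 / 2 = D / 2 by ring] at g2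
  have p1 := Real.Gamma_pos_of_pos (show 0 < (D : ℝ) / 2 by linarith)
  have p2 := Real.Gamma_pos_of_pos (show 0 < ((D : ℝ) + 1) / 2 by linarith)
  have hb : beta D ^ 2 = Real.Gamma (D / 2) ^ 2 / (π * Real.Gamma ((D + 1) / 2) ^ 2) := by
    rw [beta, div_pow, mul_pow, Real.sq_sqrt hpi.le]
  have hb0 : 0 ≤ beta D := by
    unfold beta; positivity
  constructor
  · apply Real.sqrt_le_iff.2 ⟨hb0, ?_⟩
    rw [hb, div_le_div_iff₀ (by positivity) (by positivity)]
    have := mul_le_mul_of_nonneg_left g1 hpi.le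
    nlinarith
  · apply Real.le_sqrt_of_sq_le
    rw [hb, div_le_div_iff₀ (by positivity) (by positivity)]
    have := mul_le_mul_of_nonneg_left g2 (mul_pos hpi hd1).le
    calc _ = π * (D - 1) * Real.Gamma (D / 2) ^ 2 := by ring
      _ ≤ _ := this
      _ = 2 * π * ((((D : ℝ) - 1) / 2 * Real.Gamma (((D : ℝ) - 1) / 2)) *
          Real.Gamma ((D + 1) / 2)) := by ring
      _ = _ := by rw [← r]; ring

end
end

section
/- Let r < s be positive integers, let σ_1 > σ_2 > ⋯ > σ_s ≥ 0 be real numbers, and let B_1,…,B_s ≥ 0 be real numbers such that ∑_{i=1}^r B_i > 0 and the average of the first r values is at least the overall average: (1/r)·∑_{i=1}^r B_i ≥ (1/s)·∑_{i=1}^s B_i. Then s · ∑_{i=1}^r B_i σ_i² > r · ∑_{i=1}^s B_i σ_i²; equivalently, (∑_{i=1}^r B_i σ_i²)/(∑_{i=1}^s B_i σ_i²) > r/s. Moreover, if s < d_in for positive integers d_in, d_out, then r/s ≥ r/(d_in − 1/d_out). -/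
open Finset

/-- let `r < s`, let `σ 0 > σ 1 > ⋯ > σ (s-1) ≥ 0` and `B i ≥ 0`
(`i = 0, …, s-1`, indexing the singular values and the diagonal interaction energies)
with `∑_{i<r} B i > 0` and `(1/r)·∑_{i<r} B i ≥ (1/s)·∑_{i<s} B i`.  Then
`s·∑_{i<r} B i σ i² > r·∑_{i<s} B i σ i²`, equivalently
`(∑_{i<r} B i σ i²)/(∑_{i<s} B i σ i²) > r/s`; moreover if `s < d_in` then
`r/s ≥ r/(d_in − 1/d_out)` for positive integers `d_in, d_out`. -/
theorem agzo_energy_fraction (r s : ℕ) (hr : 0 < r) (hrs : r < s)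
    (σ B : ℕ → ℝ)
    (hσanti : ∀ i j, i < j → j < s → σ j < σ i)
    (hσnonneg : ∀ i, i < s → 0 ≤ σ i)
    (hBnonneg : ∀ i, i < s → 0 ≤ B i)
    (hBpos : 0 < ∑ i ∈ Finset.range r, B i)
    (havg : (1 / r : ℝ) * ∑ i ∈ Finset.range r, B i
              ≥ (1 / s : ℝ) * ∑ i ∈ Finset.range s, B i) :
    (s : ℝ) * ∑ i ∈ Finset.range r, B i * σ i ^ 2
        > (r : ℝ) * ∑ i ∈ Finset.range s, B i * σ i ^ 2 ∧
    (∑ i ∈ Finset.range r, B i * σ i ^ 2) / (∑ i ∈ Finset.range s, B i * σ i ^ 2)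
        > (r : ℝ) / s ∧
    ∀ din dout : ℕ, 0 < din → 0 < dout → s < din →
      (r : ℝ) / s ≥ (r : ℝ) / ((din : ℝ) - 1 / dout) := by
  have hr' : (0:ℝ) < r := by exact_mod_cast hr
  have hs' : (0:ℝ) < s := by exact_mod_cast (hr.trans hrs)
  have hrs' : (r:ℝ) < s := by exact_mod_cast hrs
  have hsplit : ∀ f : ℕ → ℝ, ∑ i ∈ Finset.range s, f i
      = ∑ i ∈ Finset.range r, f i + ∑ i ∈ Finset.Ico r s, f i := fun f =>
    (Finset.sum_range_add_sum_Ico f hrs.le).symm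
  have hA : σ (r-1) ^ 2 * ∑ i ∈ Finset.range r, B i ≤ ∑ i ∈ Finset.range r, B i * σ i ^ 2 := by
    rw [Finset.mul_sum]
    refine Finset.sum_le_sum fun i hi => ?_
    have hi := Finset.mem_range.1 hi
    rw [mul_comm]
    refine mul_le_mul_of_nonneg_left ?_ (hBnonneg i (by omega))
    refine pow_le_pow_left₀ (hσnonneg _ (by omega)) ?_ 2
    rcases Nat.lt_or_ge i (r-1) with h | h
    · exact (hσanti i (r-1) h (by omega)).le
    · have : i = r - 1 := by omega
      rw [this]
  have hD : ∑ i ∈ Finset.Ico r s, B i * σ i ^ 2 ≤ σ r ^ 2 * ∑ i ∈ Finset.Ico r s, B i := by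
    rw [Finset.mul_sum]
    refine Finset.sum_le_sum fun i hi => ?_
    have hi := Finset.mem_Ico.1 hi
    rw [mul_comm]
    refine mul_le_mul_of_nonneg_right ?_ (hBnonneg i (by omega))
    refine pow_le_pow_left₀ (hσnonneg _ (by omega)) ?_ 2
    rcases Nat.lt_or_ge r i with h | h
    · exact (hσanti r i h (by omega)).le
    · have : i = r := by omega
      rw [this]
  have hD0 : 0 ≤ ∑ i ∈ Finset.Ico r s, B i * σ i ^ 2 :=
    Finset.sum_nonneg fun i hi =>
      mul_nonneg (hBnonneg i (Finset.mem_Ico.1 hi).2) (sq_nonneg _)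
  have hc : σ r ^ 2 < σ (r-1) ^ 2 :=
    pow_lt_pow_left₀ (hσanti _ _ (by omega) hrs) (hσnonneg r hrs) two_ne_zero
  have hc0 : 0 ≤ σ r ^ 2 := sq_nonneg _
  have hcP := mul_lt_mul_of_pos_right hc hBpos
  rw [hsplit B] at havg
  rw [hsplit (fun i => B i * σ i ^ 2)]
  generalize (∑ i ∈ Finset.range r, B i * σ i ^ 2) = A at *
  generalize (∑ i ∈ Finset.Ico r s, B i * σ i ^ 2) = D at *
  generalize (∑ i ∈ Finset.range r, B i) = P at *
  generalize (∑ i ∈ Finset.Ico r s, B i) = T at *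
  have h1 : (r:ℝ) * (P + T) ≤ s * P := by
    have h := mul_le_mul_of_nonneg_left havg (mul_pos hr' hs').le
    have e1 : (r:ℝ) * s * (1 / s * (P + T)) = r * (P + T) := by field_simp
    have e2 : (r:ℝ) * s * (1 / r * P) = s * P := by field_simp
    rwa [e1, e2] at h
  have hAP : σ r ^ 2 * P < A := hcP.trans_le hA
  have hA0 : 0 < A := (mul_nonneg hc0 hBpos.le).trans_lt hAP
  have main : (r:ℝ) * (A + D) < s * A := by
    have a1 := mul_lt_mul_of_pos_left hAP (sub_pos.2 hrs')
    have a2 := mul_le_mul_of_nonneg_left hD hr'.le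
    have a3 := mul_le_mul_of_nonneg_left h1 hc0
    linarith
  refine ⟨main, ?_, ?_⟩
  · rw [gt_iff_lt, div_lt_div_iff₀ hs' (by linarith)]
    linarith
  · intro din dout _ hdo hsd
    have h2 : (s:ℝ) + 1 ≤ din := by exact_mod_cast hsd
    have h3 : (1:ℝ) / dout ≤ 1 := by
      have h4 : (1:ℝ) ≤ dout := by exact_mod_cast hdo
      rw [div_le_one (by linarith)]
      exact h4
    exact div_le_div_of_nonneg_left hr'.le hs' (by linarith)
end
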